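/- arXiv:1610.09859 — 4 statements merged into one kernel-verified Lean document; each statement's English description precedes it below -/
import Mathlib

section
/- For all integers m ≥ 2 and n ≥ 1 with n ≠ m − 1, the quantities P(m,n) satisfy the recursion P(m+1,n) = α_m^{n−1} P(m,n−1) + α_m^n P(m,n) + α_m^{n+1} P(m,n+1) − α_{m−1}^{n−1} P(m−1,n−1) − α_{m−1}^n P(m−1,n) − α_{m−1}^{n+1} P(m−1,n+1) + α_{m−2}^n P(m−2,n), where α_m^{n−1} = [(2m+1)n/((m+1)(2n+1))]², α_m^n = (m(2m+1)(n²+n−m²−m)/((m+1)³(2m−1))) · [(m−1)m/(n²+n−m²+m) + 2/(2n+1)²], α_m^{n+1} = [(2m+1)(n+1)/((m+1)(2n+1))]², α_{m−1}^{n−1} = (m−1)(2m−1)(2m+1)(n²+n−m²−m)n² / ((m+1)³(n²+n−m²+m)(2n+1)²), α_{m−1}^n = 2m(n²+n−m²−m)/((m+1)³(2n+1)²) + (m/(m+1))², α_{m−1}^{n+1} = (m−1)(2m−1)(2m+1)(n²+n−m²−m)(n+1)² / ((m+1)³(n²+n−m²+m)(2n+1)²), and α_{m−2}^n = (m−1)³(2m+1)(n²+n−m²−m)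 / ((m+1)³(2m−1)(n²+n−m²+m)). -/
/-!
The integrand of the claimed relation is an exact derivative.  Fix `m`, `n` and write `A = P_m`,
`q = P_n`, `w = 1 - x²`, `b = w A' / m`, `v = w q'`.  The contiguity relations
`P_{m-1} = x A + b`, `(m+1) P_{m+1} = (m+1) x A - m b`, and the three-term recurrence for
`P_{m-2}`, together with their analogues in `n`, turn every integrand into a form that is quadratic
in `(A, b)` and quadratic in `(q, v)`, with coefficients polynomial in `x`.  Legendre's equation
gives `b' = -(m+1) A` and `v' = -n(n+1) q`, so the derivative of such a form is again of this type.
After clearing denominators, the difference of the two sides of the recursion is the integral of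
`F'` for an explicit form `F` (`primitive`), each term of which contains a factor `w`, `b` or `v`;
hence `F` vanishes at `±1`.  The identity for `F'` is `derivative_primitive`.  The hypothesis
`n ≠ m - 1` says that `n² + n - m² + m = (n + m)(n - m + 1)`, a denominator of the coefficients,
is nonzero.

The contiguity relations come from Rodrigues's formula (`mul_leg_succ`,
`derivative_leg_succ`), by computing `D^{n+1} (x² - 1)^{n+1}` in two ways with the Leibniz rule.
-/


/-- Legendre polynomial of degree `n` (Rodrigues's formula), as a real function. -/
noncomputable def legendreP (n : ℕ) (x : ℝ) : ℝ :=
  (1 / ((2:ℝ)^n * n.factorial)) * iteratedDeriv n (fun y : ℝ => (y^2 - 1)^n) x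

/-- `P(m,n) = ∫_{-1}^{1} P_m(x)² P_n(x)² dx`. -/
noncomputable def legP (m n : ℕ) : ℝ :=
  ∫ x in (-1:ℝ)..1, (legendreP m x)^2 * (legendreP n x)^2

/-- Coefficient `α_m^{n-1}`. -/
noncomputable def alphaMNm1 (m n : ℝ) : ℝ := ((2*m+1)*n / ((m+1)*(2*n+1)))^2

/-- Coefficient `α_m^n`. -/
noncomputable def alphaMN (m n : ℝ) : ℝ :=
  (m*(2*m+1)*(n^2+n-m^2-m) / ((m+1)^3*(2*m-1))) *
    ((m-1)*m/(n^2+n-m^2+m) + 2/(2*n+1)^2)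

/-- Coefficient `α_m^{n+1}`. -/
noncomputable def alphaMNp1 (m n : ℝ) : ℝ := ((2*m+1)*(n+1) / ((m+1)*(2*n+1)))^2

/-- Coefficient `α_{m-1}^{n-1}`. -/
noncomputable def alphaMm1Nm1 (m n : ℝ) : ℝ :=
  (m-1)*(2*m-1)*(2*m+1)*(n^2+n-m^2-m)*n^2 / ((m+1)^3*(n^2+n-m^2+m)*(2*n+1)^2)

/-- Coefficient `α_{m-1}^n`. -/
noncomputable def alphaMm1N (m n : ℝ) : ℝ :=
  2*m*(n^2+n-m^2-m)/((m+1)^3*(2*n+1)^2) + (m/(m+1))^2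

/-- Coefficient `α_{m-1}^{n+1}`. -/
noncomputable def alphaMm1Np1 (m n : ℝ) : ℝ :=
  (m-1)*(2*m-1)*(2*m+1)*(n^2+n-m^2-m)*(n+1)^2 / ((m+1)^3*(n^2+n-m^2+m)*(2*n+1)^2)

/-- Coefficient `α_{m-2}^n`. -/
noncomputable def alphaMm2N (m n : ℝ) : ℝ :=
  (m-1)^3*(2*m+1)*(n^2+n-m^2-m) / ((m+1)^3*(2*m-1)*(n^2+n-m^2+m))

open Polynomial

/-! ### Rodrigues's formula and the contiguity relations -/

/-- `D^n (X² - 1)^n`, the unnormalized Legendre polynomial. -/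
noncomputable def rodr (n : ℕ) : ℝ[X] := derivative^[n] ((X ^ 2 - 1) ^ n)

/-- The Legendre polynomial of degree `n`, as an element of `ℝ[X]`. -/
noncomputable def leg (n : ℕ) : ℝ[X] := C (1 / ((2 : ℝ) ^ n * n.factorial)) * rodr n

lemma legendreP_eq_eval (n : ℕ) (x : ℝ) : legendreP n x = (leg n).eval x := by
  have h : ∀ (k : ℕ) (p : ℝ[X]), iteratedDeriv k (fun y => p.eval y)
      = fun y => (derivative^[k] p).eval y := by
    intro k
    induction k with
    | zero => intro p; simp
    | succ k ih =>
      intro p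
      rw [iteratedDeriv_succ', Function.iterate_succ_apply, ← ih]
      congr 1
      funext y
      exact p.deriv
  have h' := congrFun (h n ((X ^ 2 - 1) ^ n)) x
  simp only [eval_pow, eval_sub, eval_X, eval_one] at h'
  simp [legendreP, leg, rodr, h']

lemma iterate_derivative_X_mul_succ (n : ℕ) (f : ℝ[X]) :
    derivative^[n + 1] (X * f)
      = X * derivative^[n + 1] f + C ((n : ℝ) + 1) * derivative^[n] f := by
  induction n with
  | zero => simp [derivative_mul]; ring
  | succ n ih =>
    rw [Function.iterate_succ_apply', ih]
    simp only [derivative_add, derivative_mul, derivative_X, derivative_C,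
      ← Function.iterate_succ_apply' (derivative (R := ℝ))]
    simp only [Nat.cast_add, Nat.cast_one, C_add, C_1]
    ring

lemma derivative_base_succ (n : ℕ) :
    derivative (((X : ℝ[X]) ^ 2 - 1) ^ (n + 1))
      = C (2 * ((n : ℝ) + 1)) * (X * (X ^ 2 - 1) ^ n) := by
  rw [derivative_pow]
  simp only [derivative_sub, derivative_X_pow, derivative_one, Nat.add_sub_cancel, Nat.cast_add,
    Nat.cast_one, C_mul, C_add, C_1, Nat.cast_ofNat]
  simp only [map_natCast, map_ofNat]
  ring

/-- `D^{n+2} (X² - 1)^{n+1}`, computed by applying the inner derivative first. -/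
lemma derivative_rodr_succ (n : ℕ) :
    derivative (rodr (n + 1))
      = C (2 * ((n : ℝ) + 1)) * (X * derivative (rodr n) + C ((n : ℝ) + 1) * rodr n) := by
  rw [rodr, ← Function.iterate_succ_apply' (derivative (R := ℝ)), Function.iterate_succ_apply,
    derivative_base_succ, iterate_derivative_C_mul, iterate_derivative_X_mul_succ, rodr,
    ← Function.iterate_succ_apply' (derivative (R := ℝ))]

/-- Eliminating `D^{n-1} (X² - 1)^n` between the two Leibniz expansions of
`D^{n+1} (X² - 1)^{n+1}`: one from `D (X² - 1)^{n+1} = 2(n+1) X (X² - 1)^n`, the other from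
`(X² - 1)^{n+1} = X · X (X² - 1)^n - (X² - 1)^n`. -/
lemma rodr_succ (n : ℕ) :
    rodr (n + 1)
      = 2 * ((X ^ 2 - 1) * derivative (rodr n) + C ((n : ℝ) + 1) * (X * rodr n)) := by
  obtain _ | n := n
  · simp [rodr]; ring
  obtain ⟨g, hg⟩ : ∃ g : ℝ[X], g = (X ^ 2 - 1) ^ (n + 1) := ⟨_, rfl⟩
  have e1 : rodr (n + 2)
      = C (2 * ((n : ℝ) + 2)) * (X * derivative^[n + 1] g
          + C ((n : ℝ) + 1) * derivative^[n] g) := by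
    rw [rodr, Function.iterate_succ_apply, derivative_base_succ, iterate_derivative_C_mul,
      iterate_derivative_X_mul_succ, ← hg]
    simp only [Nat.cast_add, Nat.cast_one, C_add, C_mul, C_1, map_ofNat]
    ring
  have e2 : rodr (n + 2)
      = X * (X * derivative^[n + 2] g + C ((n : ℝ) + 2) * derivative^[n + 1] g)
        + C ((n : ℝ) + 2) * (X * derivative^[n + 1] g + C ((n : ℝ) + 1) * derivative^[n] g)
        - derivative^[n + 2] g := by
    have hsplit : ((X : ℝ[X]) ^ 2 - 1) ^ (n + 2) = X * (X * g) - g := by rw [hg]; ring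
    rw [rodr, hsplit, iterate_derivative_sub, iterate_derivative_X_mul_succ,
      iterate_derivative_X_mul_succ, iterate_derivative_X_mul_succ]
    simp only [Nat.cast_add, Nat.cast_one, C_add, C_1, map_ofNat]
    ring
  have e3 : rodr (n + 1) = derivative^[n + 1] g := by rw [hg]; rfl
  have e4 : derivative (rodr (n + 1)) = derivative^[n + 2] g := by
    rw [e3, ← Function.iterate_succ_apply' (derivative (R := ℝ))]
  rw [e4, e3]
  simp only [Nat.cast_add, Nat.cast_one, C_add, C_mul, C_1, map_ofNat] at e1 e2 ⊢
  linear_combination 2 * e2 - e1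

lemma leg_normalization (n : ℕ) :
    ((n : ℝ) + 1) * (1 / ((2 : ℝ) ^ (n + 1) * (n + 1).factorial)) * 2
      = 1 / ((2 : ℝ) ^ n * n.factorial) := by
  rw [Nat.factorial_succ]
  push_cast
  have := Nat.factorial_ne_zero n
  field_simp
  ring

/-- The first contiguity relation, `(n+1) P_{n+1} = (n+1) x P_n - (1 - x²) P_n'`. -/
lemma mul_leg_succ (n : ℕ) :
    C ((n : ℝ) + 1) * leg (n + 1)
      = C ((n : ℝ) + 1) * (X * leg n) - (1 - X ^ 2) * derivative (leg n) := by
  have h := congrArg (C : ℝ →+* ℝ[X]) (leg_normalization n)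
  simp only [C_mul, map_ofNat] at h
  rw [leg, leg, rodr_succ, derivative_C_mul]
  linear_combination ((X ^ 2 - 1) * derivative (rodr n) + C ((n : ℝ) + 1) * (X * rodr n)) * h

lemma derivative_leg_succ (n : ℕ) :
    derivative (leg (n + 1)) = X * derivative (leg n) + C ((n : ℝ) + 1) * leg n := by
  have h := congrArg (C : ℝ →+* ℝ[X]) (leg_normalization n)
  simp only [C_mul, map_ofNat] at h
  rw [leg, leg, derivative_C_mul, derivative_rodr_succ, derivative_C_mul]
  simp only [C_mul, map_ofNat]
  linear_combination (X * derivative (rodr n) + C ((n : ℝ) + 1) * rodr n) * h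

/-- The second contiguity relation, `(1 - x²) P_{n+1}' = (n+1) (P_n - x P_{n+1})`. -/
lemma mul_derivative_leg_succ (n : ℕ) :
    (1 - X ^ 2) * derivative (leg (n + 1))
      = C ((n : ℝ) + 1) * (leg n - X * leg (n + 1)) := by
  rw [derivative_leg_succ]
  linear_combination X * mul_leg_succ n

/-- Legendre's differential equation. -/
lemma derivative_mul_derivative_leg (n : ℕ) :
    derivative ((1 - X ^ 2) * derivative (leg n)) = - C ((n : ℝ) * (n + 1)) * leg n := by
  have h := congrArg derivative (mul_leg_succ n)
  rw [derivative_sub, derivative_C_mul, derivative_C_mul, derivative_leg_succ, derivative_mul,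
    derivative_X] at h
  simp only [C_mul, C_add, C_1] at h ⊢
  linear_combination h

/-- Bonnet's recurrence. -/
lemma bonnet (n : ℕ) :
    C ((n : ℝ) + 2) * leg (n + 2)
      = C (2 * (n : ℝ) + 3) * (X * leg (n + 1)) - C ((n : ℝ) + 1) * leg n := by
  have h1 := mul_leg_succ (n + 1)
  have h2 := mul_derivative_leg_succ n
  simp only [Nat.cast_add, Nat.cast_one, C_mul, C_add, C_1, map_ofNat] at h1 h2 ⊢
  linear_combination h1 - h2

/-! ### Integration as a functional on polynomials -/

/-- Integration over `[-1, 1]` as a linear functional on polynomials. -/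
noncomputable def J : ℝ[X] →ₗ[ℝ] ℝ where
  toFun p := ∫ x in (-1 : ℝ)..1, p.eval x
  map_add' p q := by
    simp only [eval_add]
    exact intervalIntegral.integral_add (p.continuous.intervalIntegrable _ _)
      (q.continuous.intervalIntegrable _ _)
  map_smul' c p := by simp

lemma J_derivative (p : ℝ[X]) : J (derivative p) = p.eval 1 - p.eval (-1) :=
  intervalIntegral.integral_eq_sub_of_hasDerivAt (fun x _ => p.hasDerivAt x)
    ((derivative p).continuous.intervalIntegrable _ _)

lemma legP_eq_J (m n : ℕ) : legP m n = J (leg m ^ 2 * leg n ^ 2) := by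
  simp [legP, J, legendreP_eq_eval]

/-! ### The exact derivative -/

/-- The primitive `F`, in terms of `A = P_m`, `b = (1 - x²) P_m' / m`, `q = P_n` and
`v = (1 - x²) P_n'`; here `N = n(n+1)`, and `g`, `c₁`, `c₂`, `c₃` are constants. -/
noncomputable def primitive (g c₁ c₂ c₃ N : ℝ) (A b q v : ℝ[X]) : ℝ[X] :=
  -(C g * X * (1 - X ^ 2) * A ^ 2 * (C N * (1 - X ^ 2) * q ^ 2 + v ^ 2))
  + (1 - X ^ 2) * (C g * X ^ 2 + C c₁) * A ^ 2 * q * v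
  + A * b * (2 * C g * X ^ 2 - C c₂) * (C N * (1 - X ^ 2) * q ^ 2 + v ^ 2)
  + 2 * C g * X * (1 - X ^ 2) * A * b * q * v
  + C g * X * b ^ 2 * (C N * (1 - X ^ 2) * q ^ 2 + v ^ 2)
  + b ^ 2 * q * v * (C c₃ - C g * X ^ 2)

/-- Each term of `F` has a factor `1 - X²`, so the boundary values at `±1` vanish. -/
lemma J_derivative_primitive (g c₁ c₂ c₃ N : ℝ) (A a q s : ℝ[X]) :
    J (derivative (primitive g c₁ c₂ c₃ N A ((1 - X ^ 2) * a) q ((1 - X ^ 2) * s))) = 0 := by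
  rw [J_derivative]
  simp [primitive]

/-- The antiderivative identity behind the recursion, with all denominators cleared.  Here `A`,
`B`, `A₁`, `Z` stand for `P_m`, `P_{m-1}`, `P_{m+1}`, `P_{m-2}`, and `q`, `r`, `t` for `P_n`,
`P_{n-1}`, `P_{n+1}`, while `a = P_m' / m` and `s = P_n'`; moreover `D = n² + n - m² - m`,
`E = n² + n - m² + m`, `k = (2n+1)²`.
The constants in `F` come from comparing coefficients of monomials in `X`, `A`, `b`, `q`, `v`. -/
lemma derivative_primitive (m n D E k g c₂ : ℝ) (A a q s B A₁ Z r t : ℝ[X])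
    (hD : D = n ^ 2 + n - m ^ 2 - m) (hE : E = n ^ 2 + n - m ^ 2 + m) (hk : k = (2 * n + 1) ^ 2)
    (hg : g = (2 * m - 1) * D) (hc₂ : c₂ = (2 * m + 1) * E + g)
    (hA : derivative A = C m * a) (hq : derivative q = s)
    (hb : derivative ((1 - X ^ 2) * a) = -C (m + 1) * A)
    (hv : derivative ((1 - X ^ 2) * s) = -C (n * (n + 1)) * q)
    (hB : B = X * A + (1 - X ^ 2) * a)
    (hA₁ : C (m + 1) * A₁ = C (m + 1) * (X * A) - C m * ((1 - X ^ 2) * a))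
    (hZ : C (m - 1) * Z = C (2 * m - 1) * (X * B) - C m * A)
    (hr : C n * r = C n * (X * q) + (1 - X ^ 2) * s)
    (ht : C (n + 1) * t = C (n + 1) * (X * q) - (1 - X ^ 2) * s) :
    C ((2 * m - 1) * (2 * m + 1)) * derivative (primitive g
        (g - (m + 1) * c₂ + 2 * (2 * m + 1) * (m + 1) * E) c₂ (m * (2 * m + 1) * E + (1 - m) * g)
        (n * (n + 1)) A ((1 - X ^ 2) * a) q ((1 - X ^ 2) * s))
    = -(C ((m + 1) * E * k * (2 * m - 1)) * ((C (m + 1) * A₁) ^ 2 * q ^ 2))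
      + C ((2 * m - 1) * (2 * m + 1) ^ 2 * (m + 1) * E)
          * (A ^ 2 * ((C n * r) ^ 2 + (C (n + 1) * t) ^ 2))
      + C (m * (2 * m + 1) * D * ((m - 1) * m * k + 2 * E)) * (A ^ 2 * q ^ 2)
      - C ((m - 1) * (2 * m - 1) ^ 2 * (2 * m + 1) * D)
          * (B ^ 2 * ((C n * r) ^ 2 + (C (n + 1) * t) ^ 2))
      - C ((2 * m - 1) * (2 * m * D * E + m ^ 2 * (m + 1) * E * k)) * (B ^ 2 * q ^ 2)
      + C ((m - 1) * (2 * m + 1) * D * k) * ((C (m - 1) * Z) ^ 2 * q ^ 2) := by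
  rw [hA₁, hr, ht, hZ, hB]
  -- Naming `b` and `v` keeps the product rule from splitting them, so that the differential
  -- equations `hb`, `hv` apply.
  generalize hb0 : (1 - X ^ 2) * a = b at hb
  generalize hv0 : (1 - X ^ 2) * s = v at hv
  simp only [primitive, derivative_add, derivative_sub, derivative_neg, derivative_mul,
    derivative_pow, derivative_X, derivative_one, derivative_ofNat, derivative_C, hA, hq, hb, hv]
  subst hc₂ hg hk hE hD
  rw [← hb0, ← hv0]
  simp only [C_add, C_mul, C_1, C_sub, C_pow, Nat.cast_ofNat, map_ofNat]
  generalize (C m : ℝ[X]) = m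
  generalize (C n : ℝ[X]) = n
  generalize (X : ℝ[X]) = x
  ring

/-! ### The recursion -/

/-- The hypothesis is the recursion multiplied by the common denominator
`K = (m+1)³ (n² + n - m² + m) (2n+1)² (2m-1)` of its coefficients. -/
lemma recursion_of_cleared {m n p₁ p₂ p₃ p₄ p₅ p₆ p₇ p₈ : ℝ} (hm1 : m + 1 ≠ 0)
    (hm2 : 2 * m - 1 ≠ 0) (hn : 2 * n + 1 ≠ 0) (hE : n ^ 2 + n - m ^ 2 + m ≠ 0)
    (h : (m + 1) * (n ^ 2 + n - m ^ 2 + m) * (2 * n + 1) ^ 2 * (2 * m - 1) * ((m + 1) ^ 2 * p₁)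
      = (2 * m - 1) * (2 * m + 1) ^ 2 * (m + 1) * (n ^ 2 + n - m ^ 2 + m)
          * (n ^ 2 * p₂ + (n + 1) ^ 2 * p₄)
      + m * (2 * m + 1) * (n ^ 2 + n - m ^ 2 - m)
          * ((m - 1) * m * (2 * n + 1) ^ 2 + 2 * (n ^ 2 + n - m ^ 2 + m)) * p₃
      - (m - 1) * (2 * m - 1) ^ 2 * (2 * m + 1) * (n ^ 2 + n - m ^ 2 - m)
          * (n ^ 2 * p₅ + (n + 1) ^ 2 * p₇)
      - (2 * m - 1) * (2 * m * (n ^ 2 + n - m ^ 2 - m) * (n ^ 2 + n - m ^ 2 + m)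
          + m ^ 2 * (m + 1) * (n ^ 2 + n - m ^ 2 + m) * (2 * n + 1) ^ 2) * p₆
      + (m - 1) * (2 * m + 1) * (n ^ 2 + n - m ^ 2 - m) * (2 * n + 1) ^ 2
          * ((m - 1) ^ 2 * p₈)) :
    p₁ = alphaMNm1 m n * p₂ + alphaMN m n * p₃ + alphaMNp1 m n * p₄
      - alphaMm1Nm1 m n * p₅ - alphaMm1N m n * p₆ - alphaMm1Np1 m n * p₇
      + alphaMm2N m n * p₈ := by
  simp only [alphaMNm1, alphaMN, alphaMNp1, alphaMm1Nm1, alphaMm1N, alphaMm1Np1, alphaMm2N]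
  generalize hD : n ^ 2 + n - m ^ 2 - m = D at *
  generalize hE' : n ^ 2 + n - m ^ 2 + m = E at *
  clear hD hE'
  obtain ⟨K, hK⟩ : ∃ K : ℝ, K = (m + 1) ^ 3 * E * (2 * n + 1) ^ 2 * (2 * m - 1) := ⟨_, rfl⟩
  have hK0 : K ≠ 0 := by
    rw [hK]
    exact mul_ne_zero (mul_ne_zero (mul_ne_zero (pow_ne_zero _ hm1) hE) (pow_ne_zero _ hn)) hm2
  have hm2' : m * 2 - 1 ≠ 0 := by rwa [mul_comm] at hm2
  have c1 : K * ((2 * m + 1) * n / ((m + 1) * (2 * n + 1))) ^ 2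
      = (2 * m - 1) * (2 * m + 1) ^ 2 * (m + 1) * E * n ^ 2 := by
    rw [hK]; field_simp
  have c2 : K * ((m * (2 * m + 1) * D / ((m + 1) ^ 3 * (2 * m - 1)))
        * ((m - 1) * m / E + 2 / (2 * n + 1) ^ 2))
      = m * (2 * m + 1) * D * ((m - 1) * m * (2 * n + 1) ^ 2 + 2 * E) := by
    rw [hK]; field_simp
  have c3 : K * ((2 * m + 1) * (n + 1) / ((m + 1) * (2 * n + 1))) ^ 2
      = (2 * m - 1) * (2 * m + 1) ^ 2 * (m + 1) * E * (n + 1) ^ 2 := by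
    rw [hK]; field_simp
  have c4 : ∀ y : ℝ, K * ((m - 1) * (2 * m - 1) * (2 * m + 1) * D * y
        / ((m + 1) ^ 3 * E * (2 * n + 1) ^ 2))
      = (m - 1) * (2 * m - 1) ^ 2 * (2 * m + 1) * D * y := by
    intro y
    rw [hK]; field_simp
  have c5 : K * (2 * m * D / ((m + 1) ^ 3 * (2 * n + 1) ^ 2) + (m / (m + 1)) ^ 2)
      = (2 * m - 1) * (2 * m * D * E + m ^ 2 * (m + 1) * E * (2 * n + 1) ^ 2) := by
    rw [hK]; field_simp
  have c6 : K * ((m - 1) ^ 3 * (2 * m + 1) * D / ((m + 1) ^ 3 * (2 * m - 1) * E))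
      = (m - 1) ^ 3 * (2 * m + 1) * D * (2 * n + 1) ^ 2 := by
    rw [hK]; field_simp
  apply mul_left_cancel₀ hK0
  linear_combination h + p₁ * hK - p₂ * c1 - p₃ * c2 - p₄ * c3 + p₅ * c4 (n ^ 2) + p₆ * c5
    + p₇ * c4 ((n + 1) ^ 2) - p₈ * c6

/-- Recursion formula for the Legendre sequences `P(m,n)`. -/
theorem legP_recursion (m n : ℕ) (hm : 2 ≤ m) (hn : 1 ≤ n) (hne : n ≠ m - 1) :
    legP (m+1) n =
      alphaMNm1 m n * legP m (n-1) + alphaMN m n * legP m n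
        + alphaMNp1 m n * legP m (n+1)
      - alphaMm1Nm1 m n * legP (m-1) (n-1) - alphaMm1N m n * legP (m-1) n
        - alphaMm1Np1 m n * legP (m-1) (n+1)
      + alphaMm2N m n * legP (m-2) n := by
  obtain ⟨j, rfl⟩ : ∃ j, m = j + 2 := ⟨m - 2, by omega⟩
  obtain ⟨i, rfl⟩ : ∃ i, n = i + 1 := ⟨n - 1, by omega⟩
  simp only [show j + 2 - 1 = j + 1 by omega, show j + 2 - 2 = j by omega,
    Nat.add_sub_cancel] at hne ⊢
  obtain ⟨μ, hμ⟩ : ∃ μ : ℝ, μ = (j : ℝ) + 2 := ⟨_, rfl⟩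
  obtain ⟨ν, hν⟩ : ∃ ν : ℝ, ν = (i : ℝ) + 1 := ⟨_, rfl⟩
  have hμ' : ((j + 2 : ℕ) : ℝ) = μ := by rw [hμ]; push_cast; rfl
  have hν' : ((i + 1 : ℕ) : ℝ) = ν := by rw [hν]; push_cast; rfl
  have hj : (0 : ℝ) ≤ j := j.cast_nonneg
  have hi : (0 : ℝ) ≤ i := i.cast_nonneg
  have hμ0 : μ ≠ 0 := by linarith
  have hμ1 : μ + 1 ≠ 0 := by linarith
  have hμ2 : 2 * μ - 1 ≠ 0 := by linarith
  have hν2 : 2 * ν + 1 ≠ 0 := by linarith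
  have hE : ν ^ 2 + ν - μ ^ 2 + μ ≠ 0 := by
    have h1 : ν + μ ≠ 0 := by linarith
    have h2 : ν - μ + 1 ≠ 0 := by
      intro h
      apply hne
      have : (i : ℝ) = j := by linarith
      have : i = j := by exact_mod_cast this
      omega
    have : ν ^ 2 + ν - μ ^ 2 + μ = (ν + μ) * (ν - μ + 1) := by ring
    rw [this]
    exact mul_ne_zero h1 h2
  have hinv : (C μ : ℝ[X]) * C (1 / μ) = 1 := by
    rw [← C_mul, mul_one_div_cancel hμ0, C_1]
  have hcast : ((j + 1 : ℕ) : ℝ) + 1 = μ := by rw [hμ]; push_cast; ring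
  -- `a = P_m' / m`
  have hA : derivative (leg (j + 2)) = C μ * (C (1 / μ) * derivative (leg (j + 2))) := by
    rw [← mul_assoc, hinv, one_mul]
  have hw : (1 - X ^ 2) * (C (1 / μ) * derivative (leg (j + 2)))
      = leg (j + 1) - X * leg (j + 2) := by
    have h := mul_derivative_leg_succ (j + 1)
    rw [hcast] at h
    linear_combination C (1 / μ) * h + (leg (j + 1) - X * leg (j + 2)) * hinv
  have hb : derivative ((1 - X ^ 2) * (C (1 / μ) * derivative (leg (j + 2))))
      = -C (μ + 1) * leg (j + 2) := by
    have h := derivative_mul_derivative_leg (j + 2)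
    rw [hμ', C_mul] at h
    rw [mul_left_comm, derivative_C_mul]
    linear_combination C (1 / μ) * h - C (μ + 1) * leg (j + 2) * hinv
  have hv := derivative_mul_derivative_leg (i + 1)
  have hB : leg (j + 1)
      = X * leg (j + 2) + (1 - X ^ 2) * (C (1 / μ) * derivative (leg (j + 2))) := by
    rw [hw]; ring
  have hA₁ : C (μ + 1) * leg (j + 2 + 1) = C (μ + 1) * (X * leg (j + 2))
      - C μ * ((1 - X ^ 2) * (C (1 / μ) * derivative (leg (j + 2)))) := by
    have h := mul_leg_succ (j + 2)
    rw [hμ'] at h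
    linear_combination h + (1 - X ^ 2) * derivative (leg (j + 2)) * hinv
  have hZ : C (μ - 1) * leg j = C (2 * μ - 1) * (X * leg (j + 1)) - C μ * leg (j + 2) := by
    have h := bonnet j
    rw [show (j : ℝ) + 2 = μ by linarith, show 2 * (j : ℝ) + 3 = 2 * μ - 1 by linarith,
      show (j : ℝ) + 1 = μ - 1 by linarith] at h
    linear_combination h
  have hr : C ν * leg i = C ν * (X * leg (i + 1)) + (1 - X ^ 2) * derivative (leg (i + 1)) := by
    have h := mul_derivative_leg_succ i
    rw [← hν] at h
    linear_combination -h
  have ht := mul_leg_succ (i + 1)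
  rw [hν'] at hv ht
  have key := congrArg J (derivative_primitive μ ν _ _ _ _ _ _ _ _ _ _ _ _ _ _ rfl rfl rfl rfl rfl
    hA rfl hb hv hB hA₁ hZ hr ht)
  have hJ : ∀ (c : ℝ) (p : ℝ[X]), J (C c * p) = c * J p := by
    intro c p
    rw [← smul_eq_C_mul, map_smul, smul_eq_mul]
  have hsq : ∀ (c : ℝ) (p q : ℝ[X]), (C c * p) ^ 2 * q ^ 2 = C (c ^ 2) * (p ^ 2 * q ^ 2) := by
    intro c p q
    rw [C_pow]; ring
  have hsq' : ∀ (c d : ℝ) (p q r : ℝ[X]), p ^ 2 * ((C c * q) ^ 2 + (C d * r) ^ 2)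
      = C (c ^ 2) * (p ^ 2 * q ^ 2) + C (d ^ 2) * (p ^ 2 * r ^ 2) := by
    intro c d p q r
    rw [C_pow, C_pow]; ring
  rw [hJ, J_derivative_primitive] at key
  simp only [hsq, hsq'] at key
  simp only [map_add J, map_sub J, map_neg J, hJ, ← legP_eq_J] at key
  rw [hμ', hν']
  refine recursion_of_cleared hμ1 hμ2 hν2 hE ?_
  linear_combination key
end

section
/- For all integers m ≥ 2 and n ≥ 0, one has Q(m,n) = ((2m+1)m/((m+1)(2m−1))) · P(m,n) + ((2m+1)(m−1)/((2m−1)(m+1))) · Q(m−1,n) − (m/(m+1)) · P(m−1,n). -/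
/-- `Q(m,n) = ∫_{-1}^{1} P_{m-1}(x) P_{m+1}(x) P_n(x)² dx`. -/
noncomputable def legQ (m n : ℕ) : ℝ :=
  ∫ x in (-1:ℝ)..1, legendreP (m-1) x * legendreP (m+1) x * (legendreP n x)^2

open Polynomial in
/-- The unnormalised Legendre polynomial `D^n (X² - 1)^n`, equal to `2^n n! P_n`. -/
noncomputable def rodrigues (n : ℕ) : ℝ[X] :=
  derivative^[n] ((X ^ 2 - 1) ^ n)

open Polynomial in
/-- Bonnet's recurrence for the unnormalised Legendre polynomials. -/
lemma rodrigues_rec (n : ℕ) :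
    rodrigues (n + 2) = C (2 * (2 * (n : ℝ) + 3)) * (X * rodrigues (n + 1))
      - C (4 * ((n : ℝ) + 1) ^ 2) * rodrigues n := by
  have c2 : (C 2 : ℝ[X]) = 2 := map_ofNat C 2
  have c3 : (C 3 : ℝ[X]) = 3 := map_ofNat C 3
  have c4 : (C 4 : ℝ[X]) = 4 := map_ofNat C 4
  have hd (k : ℕ) : derivative ((X ^ 2 - 1 : ℝ[X]) ^ (k + 1))
      = C (2 * ((k : ℝ) + 1)) * (X * (X ^ 2 - 1) ^ k) := by
    simp [derivative_pow, c2]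
    ring
  have hdd : derivative (derivative ((X ^ 2 - 1 : ℝ[X]) ^ (n + 2)))
      = C (2 * ((n : ℝ) + 2) * (2 * (n : ℝ) + 3)) * (X ^ 2 - 1) ^ (n + 1)
        + C (4 * ((n : ℝ) + 2) * ((n : ℝ) + 1)) * (X ^ 2 - 1) ^ n := by
    rw [hd (n + 1), derivative_C_mul, derivative_mul, hd n]
    simp [c2, c3, c4]
    ring
  have h1 : rodrigues (n + 2) = C (2 * ((n : ℝ) + 2)) * (X * rodrigues (n + 1)
      + C ((n : ℝ) + 1) * derivative^[n] ((X ^ 2 - 1) ^ (n + 1))) := by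
    unfold rodrigues
    rw [Function.iterate_succ_apply, hd (n + 1), iterate_derivative_C_mul, mul_comm X,
      iterate_derivative_mul_X, Nat.add_sub_cancel]
    generalize derivative^[n + 1] ((X ^ 2 - 1 : ℝ[X]) ^ (n + 1)) = A
    generalize derivative^[n] ((X ^ 2 - 1 : ℝ[X]) ^ (n + 1)) = B
    simp [c2]
    ring
  have h2 : rodrigues (n + 2)
      = C (2 * ((n : ℝ) + 2) * (2 * (n : ℝ) + 3)) * derivative^[n] ((X ^ 2 - 1) ^ (n + 1))
        + C (4 * ((n : ℝ) + 2) * ((n : ℝ) + 1)) * rodrigues n := by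
    unfold rodrigues
    rw [Function.iterate_succ_apply, Function.iterate_succ_apply, hdd, iterate_map_add,
      iterate_derivative_C_mul, iterate_derivative_C_mul]
  have hne : (C ((n : ℝ) + 2) : ℝ[X]) ≠ 0 := by
    rw [Ne, C_eq_zero]
    positivity
  apply mul_left_cancel₀ hne
  simp only [map_mul, map_add, map_pow, map_natCast, map_one, c2, c3, c4] at h1 h2 ⊢
  linear_combination (2 * (n : ℝ[X]) + 3) * h1 - ((n : ℝ[X]) + 1) * h2

open Polynomial in
lemma legendreP_eq_eval_s16 (n : ℕ) (x : ℝ) :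
    legendreP n x = (rodrigues n).eval x / (2 ^ n * n.factorial) := by
  have h (k : ℕ) (p : ℝ[X]) :
      iteratedDeriv k (fun y => p.eval y) = fun y => (derivative^[k] p).eval y := by
    induction k with
    | zero => simp
    | succ k ih =>
      funext y
      rw [iteratedDeriv_succ, ih, Polynomial.deriv, Function.iterate_succ_apply']
  have h' := congrFun (h n ((X ^ 2 - 1) ^ n)) x
  simp only [eval_pow, eval_sub, eval_X, eval_one] at h'
  rw [legendreP, h', rodrigues]
  ring

lemma continuous_legendreP (n : ℕ) : Continuous (legendreP n) := by
  rw [funext (legendreP_eq_eval_s16 n)]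
  fun_prop

/-- Bonnet's recurrence. -/
lemma legendreP_rec (n : ℕ) (x : ℝ) :
    ((n : ℝ) + 2) * legendreP (n + 2) x
      = (2 * (n : ℝ) + 3) * x * legendreP (n + 1) x - ((n : ℝ) + 1) * legendreP n x := by
  simp only [legendreP_eq_eval_s16, rodrigues_rec n, Nat.factorial_succ]
  simp
  have := n.factorial_pos
  field_simp
  ring

/-- The integrand identity for `m = k + 2`. -/
lemma legendreP_mul_rec (k : ℕ) (x : ℝ) :
    legendreP (k + 1) x * legendreP (k + 3) x
      = (2 * (k : ℝ) + 5) * ((k : ℝ) + 2) / (((k : ℝ) + 3) * (2 * (k : ℝ) + 3))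
          * legendreP (k + 2) x ^ 2
        + (2 * (k : ℝ) + 5) * ((k : ℝ) + 1) / ((2 * (k : ℝ) + 3) * ((k : ℝ) + 3))
          * (legendreP k x * legendreP (k + 2) x)
        - ((k : ℝ) + 2) / ((k : ℝ) + 3) * legendreP (k + 1) x ^ 2 := by
  have h1 := legendreP_rec k x
  have h2 := legendreP_rec (k + 1) x
  push_cast at h2
  field_simp
  linear_combination (2 * (k : ℝ) + 3) * legendreP (k + 1) x * h2
    - (2 * (k : ℝ) + 5) * legendreP (k + 2) x * h1

/-- Recursion expressing `Q(m,n)` via `P(m,n)`, `Q(m-1,n)` and `P(m-1,n)`. -/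
theorem legQ_recursion (m n : ℕ) (hm : 2 ≤ m) :
    legQ m n =
      ((2*(m:ℝ)+1)*(m:ℝ) / (((m:ℝ)+1)*(2*(m:ℝ)-1))) * legP m n
      + ((2*(m:ℝ)+1)*((m:ℝ)-1) / ((2*(m:ℝ)-1)*((m:ℝ)+1))) * legQ (m-1) n
      - ((m:ℝ)/((m:ℝ)+1)) * legP (m-1) n := by
  obtain ⟨k, rfl⟩ := Nat.exists_eq_add_of_le' hm
  have hc := continuous_legendreP
  have hI {f : ℝ → ℝ} (hf : Continuous f) : IntervalIntegrable f MeasureTheory.volume (-1) 1 :=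
    hf.intervalIntegrable _ _
  have e1 : k + 2 - 1 = k + 1 := rfl
  have e2 : k + 1 - 1 = k := rfl
  simp only [legQ, legP, e1, e2]
  rw [← intervalIntegral.integral_const_mul, ← intervalIntegral.integral_const_mul,
    ← intervalIntegral.integral_const_mul, ← intervalIntegral.integral_add,
    ← intervalIntegral.integral_sub]
  · congr 1
    funext x
    have h := legendreP_mul_rec k x
    have c1 : 2 * ((k + 2 : ℕ) : ℝ) + 1 = 2 * (k : ℝ) + 5 := by push_cast; ring
    have c2 : 2 * ((k + 2 : ℕ) : ℝ) - 1 = 2 * (k : ℝ) + 3 := by push_cast; ring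
    have c3 : ((k + 2 : ℕ) : ℝ) + 1 = (k : ℝ) + 3 := by push_cast; ring
    have c4 : ((k + 2 : ℕ) : ℝ) - 1 = (k : ℝ) + 1 := by push_cast; ring
    have c5 : ((k + 2 : ℕ) : ℝ) = (k : ℝ) + 2 := by push_cast; ring
    rw [c1, c2, c3, c4, c5]
    linear_combination legendreP n x ^ 2 * h
  all_goals exact hI (by fun_prop)
end

section
/- For every natural number m, there exist real polynomials R and S, with deg S ≥ deg R + 1, such that S(n) ≠ 0 and P(m,n) = R(n)/S(n) for every natural number n; in particular, for every fixed m, the quantity P(m,n), viewed as a function of n, is a rational function of n whose denominator degree exceeds its numerator degree by at least 1. -/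
/-! ### Polynomials and integration over `[-1,1]` -/

open Polynomial in
/-- The polynomial underlying `legendreP n`, given by Rodrigues's formula inside `ℝ[X]`. -/
noncomputable def legPoly (n : ℕ) : ℝ[X] :=
  C (1 / ((2:ℝ)^n * n.factorial)) * derivative^[n] ((X^2 - 1)^n)

open Polynomial in
/-- Integration over `[-1,1]` as a functional on polynomials. -/
noncomputable def polyInt (p : ℝ[X]) : ℝ := ∫ x in (-1:ℝ)..1, p.eval x

open Polynomial in
theorem polyInt_add (p q : ℝ[X]) : polyInt (p + q) = polyInt p + polyInt q := by
  simp only [polyInt, eval_add]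
  exact intervalIntegral.integral_add (p.continuous.intervalIntegrable _ _)
    (q.continuous.intervalIntegrable _ _)

open Polynomial in
theorem polyInt_C_mul (c : ℝ) (p : ℝ[X]) : polyInt (C c * p) = c * polyInt p := by
  simp [polyInt]

open Polynomial in
theorem polyInt_derivative (p : ℝ[X]) :
    polyInt (derivative p) = p.eval 1 - p.eval (-1) := by
  unfold polyInt
  exact intervalIntegral.integral_eq_sub_of_hasDerivAt (fun x _ => p.hasDerivAt x)
    ((derivative p).continuous.intervalIntegrable _ _)

open Polynomial in
theorem polyInt_by_parts (p q : ℝ[X]) (h₁ : p.eval 1 = 0) (h₂ : p.eval (-1) = 0) :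
    polyInt (p * derivative q) = - polyInt (derivative p * q) := by
  have h := polyInt_derivative (p * q)
  rw [derivative_mul, polyInt_add] at h
  simp only [eval_mul, h₁, h₂] at h
  linarith

open Polynomial in
theorem eval_legPoly (n : ℕ) (x : ℝ) : (legPoly n).eval x = legendreP n x := by
  have h : (fun y : ℝ => (y^2 - 1)^n) = fun y => ((X^2 - 1 : ℝ[X])^n).eval y := by
    ext y; simp
  have key : ∀ (k : ℕ) (p : ℝ[X]),
      iteratedDeriv k (fun y => p.eval y) = fun y => (derivative^[k] p).eval y := by
    intro k
    induction k with
    | zero => intro p; simp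
    | succ k ih =>
      intro p
      rw [iteratedDeriv_succ']
      have : deriv (fun y => p.eval y) = fun y => (derivative p).eval y := by
        ext y; simp
      rw [this, ih, Function.iterate_succ_apply]
  rw [legendreP, h, key, legPoly, eval_mul, eval_C]

/-! ### Legendre's equation and its symmetric square -/

open Polynomial in
/-- The derivatives of `g = (X² - 1)^n` satisfy the `(k+1)`-fold differentiated form of
`(X² - 1) g' = 2 n X g`; the case `k = n` is Legendre's equation. -/
theorem rodrigues_ode (n k : ℕ) :
    (X^2 - 1 : ℝ[X]) * derivative^[k+2] ((X^2 - 1 : ℝ[X])^n)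
      + 2 * ((k : ℝ[X]) + 1) * X * derivative^[k+1] ((X^2 - 1 : ℝ[X])^n)
      + (k : ℝ[X]) * ((k : ℝ[X]) + 1) * derivative^[k] ((X^2 - 1 : ℝ[X])^n)
    = 2 * (n : ℝ[X]) * (X * derivative^[k+1] ((X^2 - 1 : ℝ[X])^n)
      + ((k : ℝ[X]) + 1) * derivative^[k] ((X^2 - 1 : ℝ[X])^n)) := by
  induction k with
  | zero =>
    have h : (X^2 - 1 : ℝ[X]) * derivative ((X^2 - 1 : ℝ[X])^n) = 2 * (n : ℝ[X]) * X * (X^2 - 1 : ℝ[X])^n := by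
      cases n with
      | zero => simp
      | succ n =>
        rw [derivative_pow]
        simp
        ring
    have h' := congrArg derivative h
    simp [derivative_mul] at h' ⊢
    linear_combination h'
  | succ k ih =>
    have h' := congrArg derivative ih
    simp only [Function.iterate_succ_apply'] at h' ⊢
    simp [derivative_mul] at h' ⊢
    linear_combination h'

open Polynomial in
/-- Legendre's equation in divergence form. -/
theorem legPoly_ode (n : ℕ) :
    derivative ((1 - X^2) * derivative (legPoly n)) = - (C ((n:ℝ) * (n + 1)) * legPoly n) := by
  have h := rodrigues_ode n n
  simp only [Function.iterate_succ_apply'] at h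
  simp only [legPoly, derivative_mul, derivative_C, derivative_sub, derivative_X_pow,
    derivative_one, C_mul, C_add, C_1, map_natCast]
  simp
  linear_combination (-(C (n.factorial:ℝ)⁻¹ * C (2^n : ℝ)⁻¹)) * h

open Polynomial in
/-- The symmetric square of Legendre's equation, integrated against `p`: an explicit
antiderivative of the integrand vanishes at `±1`. -/
theorem polyInt_ode (n : ℕ) (p : ℝ[X]) :
    polyInt ((C (2 * ((n:ℝ) * (n + 1))) * (derivative p * (1 - X^2) + derivative (p * (1 - X^2)))
      + derivative (derivative (derivative p * (1 - X^2)) * (1 - X^2))) * legPoly n ^ 2) = 0 := by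
  set y := legPoly n with hy
  set l : ℝ[X] := C ((n:ℝ) * (n + 1)) with hl
  obtain ⟨z, hz⟩ : ∃ z, z = (1 - X^2) * derivative y := ⟨_, rfl⟩
  have hode : derivative z = - (l * y) := by rw [hz]; exact legPoly_ode n
  have hl' : derivative l = 0 := by rw [hl, derivative_C]
  have h2 : (C (2 * ((n:ℝ) * (n + 1))) : ℝ[X]) = 2 * l := by rw [hl, C_mul]; rfl
  have hz1 : z.eval 1 = 0 := by simp [hz]
  have hz2 : z.eval (-1) = 0 := by simp [hz]
  -- The derivative of this polynomial is the integrand of the claim, and each term has a factor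
  -- `z` or `1 - X^2`.
  have key := polyInt_derivative (2 * p * z^2 - 2 * derivative p * (1 - X^2) * y * z
    + derivative (derivative p * (1 - X^2)) * (1 - X^2) * y^2 + 2 * l * p * (1 - X^2) * y^2)
  simp only [eval_add, eval_sub, eval_mul, eval_pow, hz1, hz2, eval_X, eval_one] at key
  norm_num [-derivative_mul, -derivative_sub, -derivative_add] at key
  rw [← key, h2]
  congr 1
  simp only [derivative_mul, derivative_add, derivative_sub, sq, hode, hl', derivative_X,
    derivative_one, derivative_ofNat]
  linear_combination (4 * l * p * y - 2 * derivative p * z - 4 * derivative p * X * y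
    + 2 * derivative (derivative p) * (1 - X^2) * y) * hz

/-! ### The norm of `P_n` -/

open Polynomial in
theorem eval_iterate_derivative_eq_zero {n k : ℕ} (h : k < n) {x : ℝ} (hx : x^2 = 1) :
    (derivative^[k] ((X^2 - 1 : ℝ[X])^n)).eval x = 0 := by
  have h1 : (X^2 - 1 : ℝ[X]) ∣ derivative^[k] ((X^2 - 1 : ℝ[X])^n) :=
    (dvd_pow_self _ (Nat.sub_ne_zero_of_lt h)).trans
      (pow_sub_dvd_iterate_derivative_pow (X^2 - 1 : ℝ[X]) n k)
  obtain ⟨q, hq⟩ := h1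
  simp [hq, hx]

open Polynomial in
/-- `j`-fold integration by parts: the derivatives of `(X² - 1)^n` of order below `n` vanish at `±1`. -/
theorem polyInt_iterate (n j : ℕ) (h : j ≤ n) :
    polyInt (derivative^[n] ((X^2 - 1 : ℝ[X])^n) * derivative^[n] ((X^2 - 1 : ℝ[X])^n))
    = (-1)^j * polyInt
      (derivative^[n - j] ((X^2 - 1 : ℝ[X])^n) * derivative^[n + j] ((X^2 - 1 : ℝ[X])^n)) := by
  induction j with
  | zero => simp
  | succ j ih =>
    rw [ih (by omega)]
    have hlt : n - (j + 1) < n := by omega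
    have hp := polyInt_by_parts (derivative^[n - (j + 1)] ((X^2 - 1 : ℝ[X])^n))
      (derivative^[n + j] ((X^2 - 1 : ℝ[X])^n))
      (eval_iterate_derivative_eq_zero hlt (by norm_num))
      (eval_iterate_derivative_eq_zero hlt (by norm_num))
    rw [← Function.iterate_succ_apply' (f := derivative), ← Function.iterate_succ_apply' (f := derivative),
      show (n - (j + 1)).succ = n - j by omega] at hp
    rw [show n + (j + 1) = (n + j).succ by omega, hp]
    ring

open Polynomial in
theorem iterate_derivative_top (n : ℕ) :
    derivative^[n + n] ((X^2 - 1 : ℝ[X])^n) = C ((2 * n).factorial : ℝ) := by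
  have hm : (X^2 - 1 : ℝ[X]).Monic := by monicity!
  have hd : (X^2 - 1 : ℝ[X]).natDegree = 2 := by compute_degree!
  have hdn : ((X^2 - 1 : ℝ[X])^n).natDegree = 2 * n := by rw [hm.natDegree_pow, hd, mul_comm]
  have hc : (derivative^[n + n] ((X^2 - 1 : ℝ[X])^n)).natDegree = 0 := by
    have := natDegree_iterate_derivative ((X^2 - 1 : ℝ[X])^n) (n + n)
    omega
  rw [eq_C_of_natDegree_eq_zero hc, coeff_iterate_derivative, zero_add, ← two_mul,
    Nat.descFactorial_self, ← hdn, (hm.pow n).coeff_natDegree]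
  simp

open Polynomial in
/-- The value of `∫ (1 - x²)^n`, from the recurrence obtained by integrating the derivative of
`x (1 - x²)^(n+1)`. -/
theorem polyInt_one_sub_sq_pow (n : ℕ) :
    polyInt ((1 - X^2 : ℝ[X])^n) * (2 * n + 1).factorial = 2 * (2^n * n.factorial)^2 := by
  induction n with
  | zero => simp [polyInt]; norm_num
  | succ n ih =>
    have h := polyInt_derivative (X * (1 - X^2 : ℝ[X])^(n+1))
    have e : derivative (X * (1 - X^2 : ℝ[X])^(n+1)) = C (2 * (n:ℝ) + 3) * (1 - X^2 : ℝ[X])^(n+1)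
        + C (-(2 * (n:ℝ) + 2)) * (1 - X^2 : ℝ[X])^n := by
      rw [derivative_mul, derivative_pow]
      have c2 : (C (2:ℝ) : ℝ[X]) = 2 := rfl
      have c3 : (C (3:ℝ) : ℝ[X]) = 3 := rfl
      simp [c2, c3]
      ring
    rw [e, polyInt_add, polyInt_C_mul, polyInt_C_mul] at h
    simp at h
    rw [show 2 * (n + 1) + 1 = (2 * n + 1 + 1) + 1 by ring, Nat.factorial_succ,
      Nat.factorial_succ (2 * n + 1), Nat.factorial_succ n]
    push_cast
    linear_combination ((2 * n + 1).factorial : ℝ) * (2 * n + 2) * h + (2 * n + 2)^2 * ih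

open Polynomial in
/-- The norm `∫ P_n² = 2 / (2 n + 1)`. -/
theorem polyInt_legPoly_sq (n : ℕ) : polyInt (legPoly n ^ 2) = 2 / (2 * n + 1) := by
  have h1 : legPoly n ^ 2 = C ((1 / ((2:ℝ)^n * n.factorial))^2) *
      (derivative^[n] ((X^2 - 1 : ℝ[X])^n) * derivative^[n] ((X^2 - 1 : ℝ[X])^n)) := by
    rw [legPoly, C_pow]; ring
  have h2 : (X^2 - 1 : ℝ[X])^n * C ((2 * n).factorial : ℝ)
      = C ((-1)^n * ((2 * n).factorial : ℝ)) * (1 - X^2 : ℝ[X])^n := by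
    rw [show (X^2 - 1 : ℝ[X]) = (-1) * (1 - X^2) by ring, mul_pow]
    simp
    ring
  rw [h1, polyInt_C_mul, polyInt_iterate n n le_rfl, Nat.sub_self, Function.iterate_zero_apply,
    iterate_derivative_top, h2, polyInt_C_mul]
  have h3 := polyInt_one_sub_sq_pow n
  have h4 : ((-1:ℝ)^n) * (-1)^n = 1 := by rw [← mul_pow]; norm_num
  rw [Nat.factorial_succ] at h3
  push_cast at h3
  have h5 : (2 * (n:ℝ) + 1) ≠ 0 := by positivity
  have h6 : (n.factorial : ℝ) ≠ 0 := by positivity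
  field_simp
  linear_combination h3 + (2 * (n:ℝ) + 1) * ((2 * n).factorial : ℝ)
    * polyInt ((1 - X^2 : ℝ[X])^n) * h4

/-! ### Moments of `P_n²` -/

open Polynomial in
/-- The moments `∫ x^k P_n(x)² dx`. -/
noncomputable def legMoment (k n : ℕ) : ℝ := polyInt (X^k * legPoly n ^ 2)

open Polynomial in
/-- `polyInt_ode` with `p = X`. -/
theorem legMoment_two (n : ℕ) :
    ((2 * (n:ℝ) + 1)^2 - 4) * legMoment 2 n = (2 * (n * (n + 1)) - 1) * legMoment 0 n := by
  have h := polyInt_ode n X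
  have e : (C (2 * ((n:ℝ) * (n + 1))) * (derivative X * (1 - X^2) + derivative (X * (1 - X^2)))
      + derivative (derivative (derivative X * (1 - X^2)) * (1 - X^2))) * legPoly n ^ 2
      = C (4 * ((n:ℝ) * (n + 1)) - 2) * (X^0 * legPoly n ^ 2)
        + C (-2 * ((2 * (n:ℝ) + 1)^2 - 4)) * (X^2 * legPoly n ^ 2) := by
    have c2 : (C (2:ℝ) : ℝ[X]) = 2 := rfl
    have c4 : (C (4:ℝ) : ℝ[X]) = 4 := rfl
    simp [derivative_mul, c2, c4]
    ring
  rw [e, polyInt_add, polyInt_C_mul, polyInt_C_mul] at h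
  simp only [legMoment]
  linear_combination (-1/2) * h

open Polynomial in
/-- `polyInt_ode` with `p = X^(j+3)`. -/
theorem legMoment_rec (j n : ℕ) :
    ((2 * (n:ℝ) + 1)^2 - ((j:ℝ) + 4)^2) * ((j:ℝ) + 4) * legMoment (j + 4) n
      = (4 * (n * (n + 1)) - 2 * ((j:ℝ) + 3)^2) * (j + 3) * legMoment (j + 2) n
        + ((j:ℝ) + 3) * (j + 2) * (j + 1) * legMoment j n := by
  have h := polyInt_ode n (X^(j+3))
  have e : (C (2 * ((n:ℝ) * (n + 1))) * (derivative (X^(j+3)) * (1 - X^2)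
        + derivative (X^(j+3) * (1 - X^2)))
      + derivative (derivative (derivative (X^(j+3)) * (1 - X^2)) * (1 - X^2))) * legPoly n ^ 2
      = C ((4 * ((n:ℝ) * (n + 1)) - 2 * ((j:ℝ) + 3)^2) * (j + 3)) * (X^(j+2) * legPoly n ^ 2)
        + C (((j:ℝ) + 3) * (j + 2) * (j + 1)) * (X^j * legPoly n ^ 2)
        + C (-(((2 * (n:ℝ) + 1)^2 - ((j:ℝ) + 4)^2) * ((j:ℝ) + 4))) * (X^(j+4) * legPoly n ^ 2) := by
    have c2 : (C (2:ℝ) : ℝ[X]) = 2 := rfl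
    have c3 : (C (3:ℝ) : ℝ[X]) = 3 := rfl
    have c4 : (C (4:ℝ) : ℝ[X]) = 4 := rfl
    simp [derivative_mul, derivative_pow, c2, c3, c4]
    ring
  rw [e, polyInt_add, polyInt_add, polyInt_C_mul, polyInt_C_mul, polyInt_C_mul] at h
  simp only [legMoment]
  linear_combination (-1) * h

theorem legendreP_neg_sq (n : ℕ) (x : ℝ) : legendreP n (-x) ^ 2 = legendreP n x ^ 2 := by
  have h := iteratedDeriv_comp_neg n (fun y : ℝ => (y^2 - 1)^n) x
  simp only [neg_sq, smul_eq_mul] at h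
  have h4 : ((-1:ℝ)^n) ^ 2 = 1 := by rw [← pow_mul, mul_comm, pow_mul]; norm_num
  simp only [legendreP]
  rw [h, mul_pow, mul_pow _ ((-1)^n * _), mul_pow, h4, one_mul]

open Polynomial in
theorem legMoment_odd {k : ℕ} (hk : Odd k) (n : ℕ) : legMoment k n = 0 := by
  have h := intervalIntegral.integral_comp_neg (a := -1) (b := 1)
    (f := fun x : ℝ => (X^k * legPoly n ^ 2).eval x)
  simp only [eval_mul, eval_pow, eval_X, eval_legPoly, legendreP_neg_sq, hk.neg_pow, neg_mul,
    neg_neg, intervalIntegral.integral_neg] at h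
  simp only [legMoment, polyInt, eval_mul, eval_pow, eval_X, eval_legPoly]
  linarith

/-! ### Proper rational functions of `n` -/

open Polynomial in
/-- Sequences that agree on `ℕ` with a rational function vanishing at infinity and having no
pole in `ℕ`. -/
def IsProperRat (f : ℕ → ℝ) : Prop :=
  ∃ R S : ℝ[X], R.natDegree + 1 ≤ S.natDegree ∧
    ∀ n : ℕ, S.eval (n:ℝ) ≠ 0 ∧ f n = R.eval (n:ℝ) / S.eval (n:ℝ)

open Polynomial in
/-- The denominator `X + 1` is used because the degree condition excludes a constant one. -/
theorem IsProperRat.zero : IsProperRat fun _ => 0 :=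
  ⟨0, X + 1, by rw [show (X + 1 : ℝ[X]) = X + C 1 by simp, natDegree_X_add_C]; simp,
    fun n => ⟨by simp; positivity, by simp⟩⟩

open Polynomial in
theorem IsProperRat.add {f g : ℕ → ℝ} (hf : IsProperRat f) (hg : IsProperRat g) :
    IsProperRat fun n => f n + g n := by
  obtain ⟨R, S, hd, h⟩ := hf
  obtain ⟨R', S', hd', h'⟩ := hg
  have hS : S ≠ 0 := fun e => (h 0).1 (by simp [e])
  have hS' : S' ≠ 0 := fun e => (h' 0).1 (by simp [e])
  refine ⟨R * S' + S * R', S * S', ?_, fun n => ⟨?_, ?_⟩⟩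
  · rw [natDegree_mul hS hS']
    have h1 := natDegree_add_le (R * S') (S * R')
    have h2 := natDegree_mul_le (p := R) (q := S')
    have h3 := natDegree_mul_le (p := S) (q := R')
    omega
  · rw [eval_mul]; exact mul_ne_zero (h n).1 (h' n).1
  · simp only [(h n).2, (h' n).2, eval_mul, eval_add]
    exact div_add_div _ _ (h n).1 (h' n).1

open Polynomial in
/-- If `b g = a f` with polynomials `deg a ≤ deg b` and `b` without zeros in `ℕ`, then `g` inherits
properness from `f`. -/
theorem IsProperRat.mul_div {f g : ℕ → ℝ} (hf : IsProperRat f) (a b : ℝ[X])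
    (hd' : a.natDegree ≤ b.natDegree) (hb : ∀ n : ℕ, b.eval (n:ℝ) ≠ 0)
    (hg : ∀ n : ℕ, b.eval (n:ℝ) * g n = a.eval (n:ℝ) * f n) : IsProperRat g := by
  obtain ⟨R, S, hd, h⟩ := hf
  have hS : S ≠ 0 := fun e => (h 0).1 (by simp [e])
  have hb0 : b ≠ 0 := fun e => hb 0 (by simp [e])
  refine ⟨a * R, b * S, ?_, fun n => ⟨?_, ?_⟩⟩
  · rw [natDegree_mul hb0 hS]
    have := natDegree_mul_le (p := a) (q := R)
    omega
  · rw [eval_mul]; exact mul_ne_zero (hb n) (h n).1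
  · have h1 := hb n
    have h2 := (h n).1
    have h3 := hg n
    rw [(h n).2] at h3
    rw [eval_mul, eval_mul]
    field_simp at h3 ⊢
    linear_combination h3

theorem IsProperRat.const_mul {f : ℕ → ℝ} (hf : IsProperRat f) (c : ℝ) :
    IsProperRat fun n => c * f n :=
  hf.mul_div (Polynomial.C c) 1 (by simp) (by simp) (by simp)

/-! ### Rationality of the moments -/

theorem odd_sq_sub_even_sq_ne_zero (n i : ℕ) : (2 * (n:ℝ) + 1)^2 - (2 * (i:ℝ))^2 ≠ 0 := by
  intro h
  have h1 : (2 * n + 1)^2 = (2 * i)^2 := by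
    have : (2 * (n:ℝ) + 1)^2 = (2 * (i:ℝ))^2 := by linarith
    exact_mod_cast this
  have h2 := Nat.pow_left_injective (n := 2) (by norm_num) h1
  omega

open Polynomial in
theorem natDegree_den (c : ℝ) : ((2 * X + 1)^2 - C c : ℝ[X]).natDegree = 2 := by
  rw [show ((2 * X + 1)^2 - C c : ℝ[X]) = C 4 * X^2 + C 4 * X + C (1 - c) by
    simp only [C_sub, C_1, map_ofNat]; ring]
  exact natDegree_quadratic (by norm_num)

open Polynomial in
theorem legMoment_zero_isProperRat : IsProperRat (legMoment 0) := by
  refine ⟨C 2, C 2 * X + C 1, ?_, fun n => ⟨?_, ?_⟩⟩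
  · rw [natDegree_linear (by norm_num), natDegree_C]
  · simp; positivity
  · simp [legMoment, polyInt_legPoly_sq]

open Polynomial in
/-- Two consecutive even moments are carried along because the recurrence has three terms. -/
theorem legMoment_even_isProperRat (i : ℕ) :
    IsProperRat (legMoment (2 * i)) ∧ IsProperRat (legMoment (2 * i + 2)) := by
  induction i with
  | zero =>
    refine ⟨legMoment_zero_isProperRat, legMoment_zero_isProperRat.mul_div
      (C 2 * X^2 + C 2 * X + C (-1)) ((2 * X + 1)^2 - C 4) ?_ (fun n => ?_) (fun n => ?_)⟩
    · rw [natDegree_den]; exact natDegree_quadratic_le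
    · have := odd_sq_sub_even_sq_ne_zero n 1
      norm_num at this ⊢
      exact this
    · have := legMoment_two n
      simp
      linear_combination this
  | succ i ih =>
    refine ⟨ih.2, ?_⟩
    obtain ⟨h0, h1⟩ := ih
    have hb : ∀ n : ℕ, ((2 * X + 1)^2 - C ((2 * ((i + 2 : ℕ):ℝ))^2) : ℝ[X]).eval (n:ℝ) ≠ 0 := by
      intro n
      have := odd_sq_sub_even_sq_ne_zero n (i + 2)
      simpa using this
    have hev : ∀ n : ℕ, ((2 * X + 1)^2 - C ((2 * ((i + 2 : ℕ):ℝ))^2) : ℝ[X]).eval (n:ℝ)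
        = (2 * (n:ℝ) + 1)^2 - (2 * ((i + 2 : ℕ):ℝ))^2 := by
      intro n; simp
    have hi : (2 * (i:ℝ) + 4) ≠ 0 := by positivity
    -- The two summands of `legMoment_rec`, each divided by the leading factor.
    have ha := (h1.mul_div
      (g := fun n => (4 * (n * (n + 1)) - 2 * (2 * (i:ℝ) + 3)^2) * (2 * (i:ℝ) + 3)
        * legMoment (2 * i + 2) n / ((2 * (n:ℝ) + 1)^2 - (2 * ((i + 2 : ℕ):ℝ))^2))
      (C (4 * (2 * (i:ℝ) + 3)) * X^2 + C (4 * (2 * (i:ℝ) + 3)) * X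
        + C (- 2 * (2 * (i:ℝ) + 3)^3))
      ((2 * X + 1)^2 - C ((2 * ((i + 2 : ℕ):ℝ))^2))
      (by rw [natDegree_den]; exact natDegree_quadratic_le) hb (fun n => by
        rw [hev, mul_div_cancel₀ _ (odd_sq_sub_even_sq_ne_zero n (i + 2))]
        simp only [eval_add, eval_mul, eval_pow, eval_C, eval_X]
        ring)).add
      (h0.mul_div
      (g := fun n => (2 * (i:ℝ) + 3) * (2 * i + 2) * (2 * i + 1)
        * legMoment (2 * i) n / ((2 * (n:ℝ) + 1)^2 - (2 * ((i + 2 : ℕ):ℝ))^2))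
      (C ((2 * (i:ℝ) + 3) * (2 * i + 2) * (2 * i + 1)))
      ((2 * X + 1)^2 - C ((2 * ((i + 2 : ℕ):ℝ))^2))
      (by rw [natDegree_C]; exact Nat.zero_le _) hb (fun n => by
        rw [hev, mul_div_cancel₀ _ (odd_sq_sub_even_sq_ne_zero n (i + 2)), eval_C]))
    have hfin := ha.const_mul (2 * (i:ℝ) + 4)⁻¹
    refine (congrArg IsProperRat (funext fun n => ?_)).mp hfin
    have hne := odd_sq_sub_even_sq_ne_zero n (i + 2)
    have hr := legMoment_rec (2 * i) n
    rw [← add_div, inv_mul_eq_div, div_div, div_eq_iff (mul_ne_zero hne hi)]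
    rw [show 2 * (i + 1) + 2 = 2 * i + 4 by ring]
    push_cast at hr ⊢
    linear_combination -hr

theorem legMoment_isProperRat (k : ℕ) : IsProperRat (legMoment k) := by
  rcases Nat.even_or_odd' k with ⟨i, rfl | rfl⟩
  · exact (legMoment_even_isProperRat i).1
  · refine (congrArg IsProperRat (funext fun n => ?_)).mp IsProperRat.zero
    exact (legMoment_odd ⟨i, rfl⟩ n).symm

open Polynomial in
theorem polyInt_mul_isProperRat (q : ℝ[X]) : IsProperRat fun n => polyInt (q * legPoly n ^ 2) := by
  induction q using Polynomial.induction_on' with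
  | add p q hp hq =>
    simp only [add_mul, polyInt_add]
    exact hp.add hq
  | monomial k a =>
    simp only [← C_mul_X_pow_eq_monomial, mul_assoc, polyInt_C_mul]
    exact (legMoment_isProperRat k).const_mul a

/-- For every fixed `m`, `P(m,n)` is a rational function of `n` whose denominator degree
exceeds its numerator degree by at least `1`. -/
theorem legP_rational (m : ℕ) :
    ∃ R S : Polynomial ℝ, R.natDegree + 1 ≤ S.natDegree ∧
      ∀ n : ℕ, S.eval (n:ℝ) ≠ 0 ∧ legP m n = R.eval (n:ℝ) / S.eval (n:ℝ) := by
  have h := polyInt_mul_isProperRat (legPoly m ^ 2)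
  simpa only [IsProperRat, legP, polyInt, Polynomial.eval_mul, Polynomial.eval_pow, eval_legPoly] using h
end

section
/- The following exact identity of integrals of Legendre polynomials holds: (9 · ∫_{−1}^{1} P_1(x)⁴ dx) · (49 · ∫_{−1}^{1} P_3(x)⁴ dx) − (42 · ∫_{−1}^{1} P_1(x)² P_3(x)² dx)² = −663764/32175; in particular this determinant is strictly negative. -/
lemma legendreP_one (x : ℝ) : legendreP 1 x = x := by
  have h : HasDerivAt (fun y : ℝ => (y^2 - 1)^1) (2 * x) x := by
    refine HasDerivAt.congr_deriv ((((hasDerivAt_id' x).pow 2).sub_const 1).pow 1) ?_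
    norm_num
  rw [legendreP, iteratedDeriv_one, h.deriv]
  norm_num [Nat.factorial]
  ring

lemma legendreP_three (x : ℝ) : legendreP 3 x = (5 * x^3 - 3 * x) / 2 := by
  have h1 : deriv (fun y : ℝ => (y^2 - 1)^3) = fun y => 6 * y^5 - 12 * y^3 + 6 * y := by
    funext y
    refine HasDerivAt.deriv ?_
    refine HasDerivAt.congr_deriv ((((hasDerivAt_id' y).pow 2).sub_const 1).pow 3) ?_
    norm_num
    ring
  have h2 : deriv (fun y : ℝ => 6 * y^5 - 12 * y^3 + 6 * y)
      = fun y => 30 * y^4 - 36 * y^2 + 6 := by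
    funext y
    refine HasDerivAt.deriv ?_
    refine HasDerivAt.congr_deriv (((((hasDerivAt_id' y).pow 5).const_mul 6).sub
      (((hasDerivAt_id' y).pow 3).const_mul 12)).add ((hasDerivAt_id' y).const_mul 6)) ?_
    norm_num
    ring
  have h3 : deriv (fun y : ℝ => 30 * y^4 - 36 * y^2 + 6) x = 120 * x^3 - 72 * x := by
    refine HasDerivAt.deriv ?_
    refine HasDerivAt.congr_deriv (((((hasDerivAt_id' x).pow 4).const_mul 30).sub
      (((hasDerivAt_id' x).pow 2).const_mul 36)).add_const 6) ?_
    norm_num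
    ring
  rw [legendreP, iteratedDeriv_succ', iteratedDeriv_succ', iteratedDeriv_one, h1, h2, h3]
  norm_num [Nat.factorial]
  ring

lemma integral_one_four : ∫ x in (-1:ℝ)..1, (legendreP 1 x)^4 = 2 / 5 := by
  simp only [legendreP_one, integral_pow]
  norm_num

lemma integral_one_three :
    ∫ x in (-1:ℝ)..1, (legendreP 1 x)^2 * (legendreP 3 x)^2 = 46 / 315 := by
  have h (x : ℝ) : (legendreP 1 x)^2 * (legendreP 3 x)^2
      = 25 / 4 * x^8 - 15 / 2 * x^6 + 9 / 4 * x^4 := by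
    rw [legendreP_one, legendreP_three]
    ring
  simp only [h]
  rw [intervalIntegral.integral_add, intervalIntegral.integral_sub]
  · simp only [intervalIntegral.integral_const_mul, integral_pow]
    norm_num
  all_goals exact Continuous.intervalIntegrable (by fun_prop) _ _

lemma integral_three_four : ∫ x in (-1:ℝ)..1, (legendreP 3 x)^4 = 482 / 5005 := by
  have h (x : ℝ) : (legendreP 3 x)^4
      = 625 / 16 * x^12 - 375 / 4 * x^10 + 675 / 8 * x^8 - 135 / 4 * x^6 + 81 / 16 * x^4 := by
    rw [legendreP_three]
    ring
  simp only [h]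
  rw [intervalIntegral.integral_add, intervalIntegral.integral_sub,
    intervalIntegral.integral_add, intervalIntegral.integral_sub]
  · simp only [intervalIntegral.integral_const_mul, integral_pow]
    norm_num
  all_goals exact Continuous.intervalIntegrable (by fun_prop) _ _

/-- The determinant `det g = g₁₁g₂₂ - g₁₂g₂₁` equals `-663764/32175 < 0`, where
`g₁₁ = 9·∫P₁⁴`, `g₂₂ = 49·∫P₃⁴`, `g₁₂ = g₂₁ = 42·∫P₁²P₃²`. -/
theorem det_g_value :
    (9 * ∫ x in (-1:ℝ)..1, (legendreP 1 x)^4) *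
        (49 * ∫ x in (-1:ℝ)..1, (legendreP 3 x)^4)
      - (42 * ∫ x in (-1:ℝ)..1, (legendreP 1 x)^2 * (legendreP 3 x)^2)^2
      = -663764/32175 ∧
    (9 * ∫ x in (-1:ℝ)..1, (legendreP 1 x)^4) *
        (49 * ∫ x in (-1:ℝ)..1, (legendreP 3 x)^4)
      - (42 * ∫ x in (-1:ℝ)..1, (legendreP 1 x)^2 * (legendreP 3 x)^2)^2 < 0 := by
  rw [integral_one_four, integral_one_three, integral_three_four]
  norm_num
end
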